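/- Let K be an algebraically closed field of characteristic zero, L a finite-dimensional semisimple Lie algebra over K, and H a Cartan subalgebra of L. Then the Lie subalgebra of L generated by the root spaces L_α for all nonzero roots α (the nonzero weight spaces of the adjoint action of H on L) is all of L. -/

import Mathlib

/-! The subalgebra `S` generated by the root spaces is normalized by `H`, because each root space is
`H`-stable, and `H + S = L` by the root space decomposition. Hence `S` is an ideal and `L ⧸ S`, a
quotient of the nilpotent algebra `H`, is solvable. A semisimple Lie algebra is perfect, and so is
`L ⧸ S`; being both solvable and perfect, `L ⧸ S` vanishes. -/

open LieAlgebra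

section Perfect

variable {R L L' : Type*} [CommRing R] [LieRing L] [LieAlgebra R L] [LieRing L'] [LieAlgebra R L']

lemma derivedSeries_one_eq_top_of_surjective {f : L →ₗ⁅R⁆ L'} (hf : Function.Surjective f)
    (hL : derivedSeries R L 1 = ⊤) : derivedSeries R L' 1 = ⊤ := by
  rw [← LieIdeal.derivedSeries_map_eq 1 hf, hL]
  exact LieIdeal.derivedSeries_map_eq 0 hf

lemma subsingleton_of_isSolvable_of_derivedSeries_one_eq_top [IsSolvable L]
    (hL : derivedSeries R L 1 = ⊤) : Subsingleton L := by
  by_contra hsub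
  have : Nontrivial L := not_subsingleton_iff_nontrivial.mp hsub
  exact (derivedSeries_lt_top_of_solvable R L).ne hL

variable (R L) in
lemma derivedSeries_one_eq_top_of_isSemisimple [IsSemisimple R L] :
    derivedSeries R L 1 = ⊤ := by
  rw [eq_top_iff, ← IsSemisimple.sSup_atoms_eq_top, sSup_le_iff]
  intro I hI
  calc I = ⁅I, I⁆ :=
        (lie_eq_self_of_isAtom_of_nonabelian I hI
          (IsSemisimple.non_abelian_of_isAtom I hI)).symm
    _ ≤ derivedSeries R L 1 := LieSubmodule.mono_lie le_top le_top

end Perfect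

section Quotient

variable {R L : Type*} [CommRing R] [LieRing L] [LieAlgebra R L]

/-- The projection `L → L ⧸ I` onto the quotient by an ideal, as a morphism of Lie algebras;
`LieSubmodule.Quotient.mk'` is the same map as a morphism of `L`-modules. -/
def lieIdealQuotientHom (I : LieIdeal R L) : L →ₗ⁅R⁆ L ⧸ I :=
  { (LieSubmodule.Quotient.mk' I : L →ₗ[R] L ⧸ I) with
    map_lie' := fun {x y} ↦ LieSubmodule.Quotient.mk_bracket I x y }

lemma lieIdealQuotientHom_surjective (I : LieIdeal R L) :
    Function.Surjective (lieIdealQuotientHom I) :=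
  LieSubmodule.Quotient.surjective_mk' I

lemma lieIdealQuotientHom_comp_incl_surjective {H : LieSubalgebra R L} {I : LieIdeal R L}
    (hHI : H.toSubmodule ⊔ I.toSubmodule = ⊤) :
    Function.Surjective ((lieIdealQuotientHom I).comp H.incl) := by
  intro q
  obtain ⟨x, rfl⟩ := lieIdealQuotientHom_surjective I q
  obtain ⟨h, hh, y, hy, rfl⟩ := Submodule.mem_sup.mp (hHI ▸ Submodule.mem_top (x := x))
  refine ⟨⟨h, hh⟩, ?_⟩
  have hy_zero : lieIdealQuotientHom I y = 0 := (LieSubmodule.Quotient.mk_eq_zero I).mpr hy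
  simp [hy_zero]

lemma lieIdeal_eq_top_of_sup_eq_top (hL : derivedSeries R L 1 = ⊤) {H : LieSubalgebra R L}
    [IsSolvable H] {I : LieIdeal R L} (hHI : H.toSubmodule ⊔ I.toSubmodule = ⊤) : I = ⊤ := by
  have : IsSolvable (L ⧸ I) :=
    (lieIdealQuotientHom_comp_incl_surjective hHI).lieAlgebra_isSolvable
  have : Subsingleton (L ⧸ I) := subsingleton_of_isSolvable_of_derivedSeries_one_eq_top
    (derivedSeries_one_eq_top_of_surjective (lieIdealQuotientHom_surjective I) hL)
  exact LieSubmodule.toSubmodule_injective (Submodule.Quotient.subsingleton_iff.mp this)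

end Quotient

section Normalizer

variable {R L : Type*} [CommRing R] [LieRing L] [LieAlgebra R L]

lemma lieSubalgebra_eq_top_of_le_normalizer (hL : derivedSeries R L 1 = ⊤)
    {H S : LieSubalgebra R L} [IsSolvable H] (hHS : H ≤ S.normalizer)
    (hsup : H.toSubmodule ⊔ S.toSubmodule = ⊤) : S = ⊤ := by
  have normalizer_eq_top : S.normalizer.toSubmodule = ⊤ :=
    eq_top_iff.mpr (hsup ▸ sup_le hHS S.le_normalizer)
  obtain ⟨I, rfl⟩ : ∃ I : LieIdeal R L, (I : LieSubalgebra R L) = S :=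
    (LieSubalgebra.exists_lieIdeal_coe_eq_iff R S).mpr fun x y hy ↦
      LieSubalgebra.ideal_in_normalizer
        (normalizer_eq_top ▸ Submodule.mem_top : x ∈ S.normalizer.toSubmodule) hy
  rw [lieIdeal_eq_top_of_sup_eq_top hL hsup, LieIdeal.top_toLieSubalgebra]

lemma mem_normalizer_lieSpan {s : Set L} {x : L}
    (hx : ∀ y ∈ s, ⁅x, y⁆ ∈ LieSubalgebra.lieSpan R L s) :
    x ∈ (LieSubalgebra.lieSpan R L s).normalizer := by
  rw [LieSubalgebra.mem_normalizer_iff]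
  intro y hy
  induction hy using LieSubalgebra.lieSpan_induction with
  | mem y hy => exact hx y hy
  | zero => simp
  | add y z _ _ hy hz => simpa only [lie_add] using add_mem hy hz
  | smul a y _ hy => simpa only [lie_smul] using LieSubalgebra.smul_mem _ a hy
  | lie y z hy hz hxy hxz =>
    rw [leibniz_lie]
    exact add_mem (LieSubalgebra.lie_mem _ hxy hz) (LieSubalgebra.lie_mem _ hy hxz)

end Normalizer

section RootSpaces

variable {R L : Type*} [CommRing R] [LieRing L] [LieAlgebra R L] (H : LieSubalgebra R L)

/-- The Lie subalgebra generated by the root spaces of the nonzero functions `α : H → R`. All such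
functions are allowed, since the generalized weight space of a non-root is zero. -/
def rootSpacesLieSpan [LieRing.IsNilpotent H] : LieSubalgebra R L :=
  LieSubalgebra.lieSpan R L (⋃ (α : H → R) (_ : α ≠ 0), (rootSpace H α : Set L))

variable {H} in
lemma rootSpace_le_rootSpacesLieSpan [LieRing.IsNilpotent H] {α : H → R} (hα : α ≠ 0) :
    (rootSpace H α).toSubmodule ≤ (rootSpacesLieSpan H).toSubmodule :=
  fun _ hx ↦ LieSubalgebra.subset_lieSpan (Set.mem_iUnion₂_of_mem hα hx)

lemma le_normalizer_rootSpacesLieSpan [LieRing.IsNilpotent H] :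
    H ≤ (rootSpacesLieSpan H).normalizer := by
  intro h hh
  refine mem_normalizer_lieSpan fun y hy ↦ ?_
  obtain ⟨α, hα, hyα⟩ := Set.mem_iUnion₂.mp hy
  exact rootSpace_le_rootSpacesLieSpan hα ((rootSpace H α).lie_mem (x := ⟨h, hh⟩) hyα)

lemma cartan_sup_rootSpacesLieSpan_eq_top [H.IsCartanSubalgebra] [IsNoetherian R L]
    (hdecomp : ⨆ α : H → R, rootSpace H α = ⊤) :
    H.toSubmodule ⊔ (rootSpacesLieSpan H).toSubmodule = ⊤ := by
  rw [eq_top_iff, ← LieSubmodule.top_toSubmodule (R := R) (L := H), ← hdecomp,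
    LieSubmodule.iSup_toSubmodule, iSup_le_iff]
  intro α
  rcases eq_or_ne α 0 with rfl | hα
  · rw [rootSpace_zero_eq, LieSubalgebra.coe_toLieSubmodule]
    exact le_sup_left
  · exact le_sup_of_le_right (rootSpace_le_rootSpacesLieSpan hα)

end RootSpaces

theorem semisimple_generated_by_rootSpaces_general
    {R L : Type*} [CommRing R] [LieRing L] [LieAlgebra R L] [IsNoetherian R L]
    (hL : derivedSeries R L 1 = ⊤) (H : LieSubalgebra R L) [H.IsCartanSubalgebra]
    (hdecomp : ⨆ α : H → R, rootSpace H α = ⊤) :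
    LieSubalgebra.lieSpan R L
      (⋃ (α : H → R) (_ : α ≠ 0), (rootSpace H α : Set L)) = ⊤ :=
  lieSubalgebra_eq_top_of_le_normalizer hL (le_normalizer_rootSpacesLieSpan H)
    (cartan_sup_rootSpacesLieSpan_eq_top H hdecomp)

/-- A finite-dimensional semisimple Lie algebra `L` over an algebraically closed field of
characteristic zero is generated, as a Lie algebra, by the root spaces `L_α` for the
nonzero roots `α` of a Cartan subalgebra `H`. -/
theorem semisimple_generated_by_rootSpaces
    (K : Type*) [Field K] [IsAlgClosed K] [CharZero K]
    (L : Type*) [LieRing L] [LieAlgebra K L] [FiniteDimensional K L]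
    [LieAlgebra.IsSemisimple K L]
    (H : LieSubalgebra K L) [H.IsCartanSubalgebra] :
    LieSubalgebra.lieSpan K L
      (⋃ (α : H → K) (_ : α ≠ 0), (LieAlgebra.rootSpace H α : Set L)) = ⊤ :=
  semisimple_generated_by_rootSpaces_general (derivedSeries_one_eq_top_of_isSemisimple K L) H
    (LieModule.iSup_genWeightSpace_eq_top K H L)
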